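/- arXiv:1710.09476 — 7 statements merged into one kernel-verified Lean document; each statement's English description precedes it below -/
import Mathlib

section
/- Let κ, δ, σ, λ > 0 and μ̄ ∈ ℝ, and define η(λ) := (δ⁴/(4κσ²)) · λ/(κσ²(κ+λ)² + (κ+λ)δ²) + μ̄²/(2σ²). Then η(λ) ≤ (δ²/(4σ²κ)) · δ²/(2σκ√(σ²κ² + δ²) + 2σ²κ² + δ²) + μ̄²/(2σ²), and equality holds if and only if λ = λ̂ := √(κ² + δ²/σ²). -/
/-!
In `λ` the denominator of `η` is a quadratic `a λ² + b λ + c` with `a, c > 0`. By AM-GM in the form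
`a λ² + c = 2 √(a c) λ + (√a λ - √c)²`, it is at least `(b + 2 √(a c)) λ`, with equality exactly
when `√a λ = √c`. Dividing through bounds `λ / (a λ² + b λ + c)` by `1 / (b + 2 √(a c))`.
-/

section Quadratic

variable {a b c x : ℝ}

theorem quadratic_eq_mul_add_sq (ha : 0 ≤ a) (hc : 0 ≤ c) :
    a * x ^ 2 + b * x + c = x * (b + 2 * √(a * c)) + (√a * x - √c) ^ 2 := by
  rw [Real.sqrt_mul ha]
  linear_combination (-x ^ 2) * Real.sq_sqrt ha - Real.sq_sqrt hc

theorem div_quadratic_le (ha : 0 ≤ a) (hc : 0 ≤ c) (hbac : 0 < b + 2 * √(a * c))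
    (hquad : 0 < a * x ^ 2 + b * x + c) :
    x / (a * x ^ 2 + b * x + c) ≤ 1 / (b + 2 * √(a * c)) := by
  rw [div_le_div_iff₀ hquad hbac, one_mul, quadratic_eq_mul_add_sq ha hc]
  exact le_add_of_nonneg_right (sq_nonneg _)

theorem div_quadratic_eq_iff (ha : 0 < a) (hc : 0 ≤ c) (hbac : b + 2 * √(a * c) ≠ 0)
    (hquad : a * x ^ 2 + b * x + c ≠ 0) :
    x / (a * x ^ 2 + b * x + c) = 1 / (b + 2 * √(a * c)) ↔ x = √(c / a) := by
  rw [div_eq_div_iff hquad hbac, one_mul, quadratic_eq_mul_add_sq ha.le hc, left_eq_add,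
    sq_eq_zero_iff, sub_eq_zero, Real.sqrt_div hc, eq_div_iff (Real.sqrt_pos.2 ha).ne', mul_comm]

end Quadratic

/-- The growth rate `η(l)` of the exponential-moving-average strategy with averaging parameter `l`,
for a stock of volatility `σ` whose drift is an Ornstein–Uhlenbeck process with mean-reversion
speed `κ`, long-run mean `μ` and volatility `δ`. -/
noncomputable def expmaGrowthRate (κ δ σ μ l : ℝ) : ℝ :=
  δ ^ 4 / (4 * κ * σ ^ 2) * (l / (κ * σ ^ 2 * (κ + l) ^ 2 + (κ + l) * δ ^ 2))
    + μ ^ 2 / (2 * σ ^ 2)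

/-- The closed form of the maximum of `expmaGrowthRate κ δ σ μ` over averaging parameters `l > -κ`,
for `κ, σ > 0`. -/
noncomputable def expmaMaxGrowthRate (κ δ σ μ : ℝ) : ℝ :=
  δ ^ 2 / (4 * σ ^ 2 * κ)
      * (δ ^ 2 / (2 * σ * κ * √(σ ^ 2 * κ ^ 2 + δ ^ 2) + 2 * σ ^ 2 * κ ^ 2 + δ ^ 2))
    + μ ^ 2 / (2 * σ ^ 2)

section GrowthRate

variable {κ δ σ μ l : ℝ}

theorem expma_denominator_eq_quadratic :
    κ * σ ^ 2 * (κ + l) ^ 2 + (κ + l) * δ ^ 2 =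
      κ * σ ^ 2 * l ^ 2 + (2 * σ ^ 2 * κ ^ 2 + δ ^ 2) * l + κ * (σ ^ 2 * κ ^ 2 + δ ^ 2) := by
  ring

theorem expma_denominator_pos (hκ : 0 < κ) (hσ : σ ≠ 0) (hl : -κ < l) :
    0 < κ * σ ^ 2 * (κ + l) ^ 2 + (κ + l) * δ ^ 2 := by
  have hκl : 0 < κ + l := neg_lt_iff_pos_add'.1 hl
  generalize κ + l = t at hκl ⊢
  positivity

theorem sqrt_expma_leading_mul_const (hκ : 0 ≤ κ) (hσ : 0 ≤ σ) :
    √(κ * σ ^ 2 * (κ * (σ ^ 2 * κ ^ 2 + δ ^ 2))) = σ * κ * √(σ ^ 2 * κ ^ 2 + δ ^ 2) := by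
  have hsq : κ * σ ^ 2 * (κ * (σ ^ 2 * κ ^ 2 + δ ^ 2)) =
      (σ * κ) ^ 2 * (σ ^ 2 * κ ^ 2 + δ ^ 2) := by ring
  rw [hsq, Real.sqrt_mul (sq_nonneg _), Real.sqrt_sq (mul_nonneg hσ hκ)]

theorem expmaMaxGrowthRate_eq (hκ : 0 ≤ κ) (hσ : 0 ≤ σ) :
    expmaMaxGrowthRate κ δ σ μ =
      δ ^ 4 / (4 * κ * σ ^ 2)
          * (1 / (2 * σ ^ 2 * κ ^ 2 + δ ^ 2
            + 2 * √(κ * σ ^ 2 * (κ * (σ ^ 2 * κ ^ 2 + δ ^ 2)))))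
        + μ ^ 2 / (2 * σ ^ 2) := by
  rw [expmaMaxGrowthRate, sqrt_expma_leading_mul_const hκ hσ]
  ring

theorem expma_growth_rate_upper_bound_general (hκ : 0 < κ) (hδ : δ ≠ 0) (hσ : 0 < σ)
    (hl : -κ < l) :
    expmaGrowthRate κ δ σ μ l ≤ expmaMaxGrowthRate κ δ σ μ
    ∧ (expmaGrowthRate κ δ σ μ l = expmaMaxGrowthRate κ δ σ μ
        ↔ l = √(κ ^ 2 + δ ^ 2 / σ ^ 2)) := by
  have hfactor : 0 < δ ^ 4 / (4 * κ * σ ^ 2) := by positivity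
  have ha : 0 < κ * σ ^ 2 := by positivity
  have hc : 0 ≤ κ * (σ ^ 2 * κ ^ 2 + δ ^ 2) := by positivity
  have hbac : 0 < 2 * σ ^ 2 * κ ^ 2 + δ ^ 2
      + 2 * √(κ * σ ^ 2 * (κ * (σ ^ 2 * κ ^ 2 + δ ^ 2))) := by positivity
  have hquad := expma_denominator_pos (δ := δ) hκ hσ.ne' hl
  have hratio : κ ^ 2 + δ ^ 2 / σ ^ 2 = κ * (σ ^ 2 * κ ^ 2 + δ ^ 2) / (κ * σ ^ 2) := by
    field_simp
  rw [expma_denominator_eq_quadratic] at hquad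
  rw [expmaMaxGrowthRate_eq hκ.le hσ.le, expmaGrowthRate, expma_denominator_eq_quadratic, hratio,
    add_le_add_iff_right, mul_le_mul_iff_right₀ hfactor, add_left_inj, mul_right_inj' hfactor.ne']
  exact ⟨div_quadratic_le ha.le hc hbac hquad, div_quadratic_eq_iff ha hc hbac.ne' hquad.ne'⟩

end GrowthRate

/-- The long-term growth rate `η(λ)` of ExpMA strategies is bounded above by the
stated constant, with equality iff `λ = √(κ² + δ²/σ²)`. -/
theorem expma_growth_rate_upper_bound
    (κ δ σ μbar lam : ℝ) (hκ : 0 < κ) (hδ : 0 < δ) (hσ : 0 < σ) (hlam : 0 < lam)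
    (η : ℝ → ℝ)
    (hη : ∀ l : ℝ, η l =
      δ ^ 4 / (4 * κ * σ ^ 2) * (l / (κ * σ ^ 2 * (κ + l) ^ 2 + (κ + l) * δ ^ 2))
        + μbar ^ 2 / (2 * σ ^ 2)) :
    η lam ≤ δ ^ 2 / (4 * σ ^ 2 * κ)
        * (δ ^ 2 / (2 * σ * κ * Real.sqrt (σ ^ 2 * κ ^ 2 + δ ^ 2) + 2 * σ ^ 2 * κ ^ 2 + δ ^ 2))
        + μbar ^ 2 / (2 * σ ^ 2)
    ∧ (η lam = δ ^ 2 / (4 * σ ^ 2 * κ)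
        * (δ ^ 2 / (2 * σ * κ * Real.sqrt (σ ^ 2 * κ ^ 2 + δ ^ 2) + 2 * σ ^ 2 * κ ^ 2 + δ ^ 2))
        + μbar ^ 2 / (2 * σ ^ 2)
        ↔ lam = Real.sqrt (κ ^ 2 + δ ^ 2 / σ ^ 2)) := by
  rw [hη lam]
  exact expma_growth_rate_upper_bound_general hκ hδ.ne' hσ ((neg_neg_of_pos hκ).trans hlam)
end

section
/- Let κ, δ, σ > 0 and μ̄ ∈ ℝ, and define η(λ) := (δ⁴/(4κσ²)) · λ/(κσ²(κ+λ)² + (κ+λ)δ²) + μ̄²/(2σ²) for λ > 0. Then for every λ > 0, η is differentiable at λ with derivative η'(λ) = −(δ⁴/4) · (λ² − (κ² + δ²/σ²)) / (σ²κ(κ+λ)² + δ²(κ+λ))². -/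
/-!
Expanded in powers of `λ`, the denominator of `η` is a quadratic `a λ² + b λ + c`, and the
derivative of `λ / (a λ² + b λ + c)` has numerator `c - a λ²`: the linear coefficient drops out.
Here `a = κ σ²` and `c = κ σ² (κ² + δ² / σ²)`, so the factor `κ σ²` cancels against the prefactor.
-/

section NontriviallyNormedField

variable {𝕜 : Type*} [NontriviallyNormedField 𝕜]

theorem hasDerivAt_quadratic (a b c x : 𝕜) :
    HasDerivAt (fun y : 𝕜 => a * y ^ 2 + b * y + c) (2 * a * x + b) x := by
  have hquad : HasDerivAt (fun y : 𝕜 => a * y ^ 2) (a * (2 * x)) x := by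
    simpa using (hasDerivAt_pow 2 x).const_mul a
  exact ((hquad.fun_add (hasDerivAt_const_mul b)).add_const c).congr_deriv (by ring)

theorem hasDerivAt_div_quadratic {a b c x : 𝕜} (hx : a * x ^ 2 + b * x + c ≠ 0) :
    HasDerivAt (fun y : 𝕜 => y / (a * y ^ 2 + b * y + c))
      ((c - a * x ^ 2) / (a * x ^ 2 + b * x + c) ^ 2) x :=
  ((hasDerivAt_id' x).fun_div (hasDerivAt_quadratic a b c x) hx).congr_deriv (by ring)

theorem hasDerivAt_div_quadratic_add {κ a d x : 𝕜}
    (hx : a * (κ + x) ^ 2 + (κ + x) * d ≠ 0) :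
    HasDerivAt (fun y : 𝕜 => y / (a * (κ + y) ^ 2 + (κ + y) * d))
      ((a * κ ^ 2 + κ * d - a * x ^ 2) / (a * (κ + x) ^ 2 + (κ + x) * d) ^ 2) x := by
  have expand (y : 𝕜) : a * (κ + y) ^ 2 + (κ + y) * d =
      a * y ^ 2 + (2 * a * κ + d) * y + (a * κ ^ 2 + κ * d) := by ring
  simp only [expand] at hx ⊢
  exact hasDerivAt_div_quadratic hx

theorem expma_growth_rate_deriv_general {κ δ σ lam : 𝕜} (μbar : 𝕜) (h4 : (4 : 𝕜) ≠ 0)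
    (hκ : κ ≠ 0) (hσ : σ ≠ 0) (hlam : κ * σ ^ 2 * (κ + lam) ^ 2 + (κ + lam) * δ ^ 2 ≠ 0) :
    HasDerivAt
      (fun l : 𝕜 =>
        δ ^ 4 / (4 * κ * σ ^ 2) * (l / (κ * σ ^ 2 * (κ + l) ^ 2 + (κ + l) * δ ^ 2))
          + μbar ^ 2 / (2 * σ ^ 2))
      (-(δ ^ 4 / 4) * (lam ^ 2 - (κ ^ 2 + δ ^ 2 / σ ^ 2))
        / (σ ^ 2 * κ * (κ + lam) ^ 2 + δ ^ 2 * (κ + lam)) ^ 2)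
      lam := by
  have numerator : δ ^ 4 / (4 * κ * σ ^ 2) *
      (κ * σ ^ 2 * κ ^ 2 + κ * δ ^ 2 - κ * σ ^ 2 * lam ^ 2) =
        -(δ ^ 4 / 4) * (lam ^ 2 - (κ ^ 2 + δ ^ 2 / σ ^ 2)) := by
    field_simp
    ring
  have denominator : κ * σ ^ 2 * (κ + lam) ^ 2 + (κ + lam) * δ ^ 2 =
      σ ^ 2 * κ * (κ + lam) ^ 2 + δ ^ 2 * (κ + lam) := by ring
  refine (((hasDerivAt_div_quadratic_add hlam).const_mul _).add_const _).congr_deriv ?_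
  rw [← mul_div_assoc, numerator, denominator]

end NontriviallyNormedField

/-- Derivative of the long-term growth rate `η` in the averaging parameter `λ`. -/
theorem expma_growth_rate_deriv
    (κ δ σ μbar : ℝ) (hκ : 0 < κ) (hδ : 0 < δ) (hσ : 0 < σ) :
    ∀ lam : ℝ, 0 < lam →
      HasDerivAt
        (fun l : ℝ =>
          δ ^ 4 / (4 * κ * σ ^ 2) * (l / (κ * σ ^ 2 * (κ + l) ^ 2 + (κ + l) * δ ^ 2))
            + μbar ^ 2 / (2 * σ ^ 2))
        (-(δ ^ 4 / 4) * (lam ^ 2 - (κ ^ 2 + δ ^ 2 / σ ^ 2))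
          / (σ ^ 2 * κ * (κ + lam) ^ 2 + δ ^ 2 * (κ + lam)) ^ 2)
        lam := by
  intro lam hlam
  exact expma_growth_rate_deriv_general μbar four_ne_zero hκ.ne' hσ.ne' (by positivity)
end

section
/- Fix λ, σ, δ > 0 and μ̄ ≠ 0. Define, for κ > 0, η(λ; κ) := (δ⁴/(4κσ²)) · λ/(κσ²(κ+λ)² + (κ+λ)δ²) + μ̄²/(2σ²) and ξ(κ) := δ²/(4κσ²) + μ̄²/(2σ²). Then lim_{κ→0⁺} η(λ; κ)/ξ(κ) = 1 and lim_{κ→∞} η(λ; κ)/ξ(κ) = 1. -/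
open Filter

/-!
Write `η = a q + b` and `ξ = a + b`, where `a = δ² / (4 κ σ²)` is the growth due to the fluctuations
of the drift, `b = μ̄² / (2 σ²)` that due to its mean, and
`q = λ / (κ + λ) * (δ² / (δ² + κ σ² (κ + λ)))` is the share of `a` that the moving average captures.
As `κ → 0⁺`, `a` explodes but `q → 1`, so nothing is lost to leading order; as `κ → ∞`, `q → 0` but
`a → 0` too, so that both rates tend to `b ≠ 0`.
-/

section Field

variable {α 𝕜 : Type*} [Field 𝕜] [TopologicalSpace 𝕜] {l : Filter α} {a b q : α → 𝕜} {B Q : 𝕜}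

theorem tendsto_mul_add_div_add_of_tendsto_atTop [LinearOrder 𝕜] [IsStrictOrderedRing 𝕜]
    [OrderTopology 𝕜] (ha : Tendsto a l atTop) (hb : Tendsto b l (nhds B))
    (hq : Tendsto q l (nhds Q)) :
    Tendsto (fun x => (a x * q x + b x) / (a x + b x)) l (nhds Q) := by
  have hba : Tendsto (fun x => b x / a x) l (nhds 0) := hb.div_atTop ha
  have hlim : Tendsto (fun x => (q x + b x / a x) / (1 + b x / a x)) l (nhds Q) := by
    simpa [Pi.div_def] using (hq.add hba).div (hba.const_add 1) (by simp)
  refine hlim.congr' ?_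
  filter_upwards [ha.eventually_ne_atTop 0] with x hax
  rw [← mul_div_mul_left _ _ hax, mul_add, mul_add, mul_div_cancel₀ _ hax, mul_one]

theorem tendsto_mul_add_div_add_of_tendsto_zero [IsTopologicalDivisionRing 𝕜]
    (ha : Tendsto a l (nhds 0)) (hb : Tendsto b l (nhds B)) (hB : B ≠ 0)
    (hq : Tendsto q l (nhds Q)) :
    Tendsto (fun x => (a x * q x + b x) / (a x + b x)) l (nhds 1) := by
  simpa [Pi.div_def, hB] using ((ha.mul hq).add hb).div (ha.add hb) (by simpa using hB)

end Field

/-- The part `δ² / (4 κ σ²)` of the growth rate under full observation that is due to the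
fluctuations of the drift around its long-run mean: half the stationary variance `δ² / (2 κ)` of the
drift, divided by `σ²`. -/
noncomputable def driftFluctuationGrowthRate (σ δ κ : ℝ) : ℝ :=
  δ ^ 2 / (4 * κ * σ ^ 2)

/-- The share of `driftFluctuationGrowthRate` that is captured by the optimal strategy based on
the exponential moving average with parameter `lam`. -/
noncomputable def movingAverageEfficiency (lam σ δ κ : ℝ) : ℝ :=
  lam / (κ + lam) * (δ ^ 2 / (δ ^ 2 + κ * σ ^ 2 * (κ + lam)))

section GrowthRates

variable {lam σ δ : ℝ}

theorem driftFluctuationGrowthRate_mul_movingAverageEfficiency (lam σ δ κ : ℝ) :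
    driftFluctuationGrowthRate σ δ κ * movingAverageEfficiency lam σ δ κ =
      δ ^ 4 / (4 * κ * σ ^ 2) *
        (lam / (κ * σ ^ 2 * (κ + lam) ^ 2 + (κ + lam) * δ ^ 2)) := by
  have hfactor : κ * σ ^ 2 * (κ + lam) ^ 2 + (κ + lam) * δ ^ 2 =
      (κ + lam) * (δ ^ 2 + κ * σ ^ 2 * (κ + lam)) := by ring
  rw [driftFluctuationGrowthRate, movingAverageEfficiency, hfactor]
  simp only [div_mul_div_comm]
  ring

theorem driftFluctuationGrowthRate_eq_mul_inv (σ δ κ : ℝ) :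
    driftFluctuationGrowthRate σ δ κ = δ ^ 2 / (4 * σ ^ 2) * κ⁻¹ := by
  rw [driftFluctuationGrowthRate]
  ring

theorem tendsto_driftFluctuationGrowthRate_nhdsGT_zero (hσ : σ ≠ 0) (hδ : δ ≠ 0) :
    Tendsto (driftFluctuationGrowthRate σ δ) (nhdsWithin 0 (Set.Ioi 0)) atTop := by
  simp only [funext (driftFluctuationGrowthRate_eq_mul_inv σ δ)]
  exact tendsto_inv_nhdsGT_zero.const_mul_atTop (by positivity)

theorem tendsto_driftFluctuationGrowthRate_atTop (σ δ : ℝ) :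
    Tendsto (driftFluctuationGrowthRate σ δ) atTop (nhds 0) := by
  simp only [funext (driftFluctuationGrowthRate_eq_mul_inv σ δ)]
  simpa using (tendsto_inv_atTop_zero (𝕜 := ℝ)).const_mul (δ ^ 2 / (4 * σ ^ 2))

theorem tendsto_movingAverageEfficiency_nhds_zero (hlam : lam ≠ 0) (σ : ℝ) (hδ : δ ≠ 0) :
    Tendsto (movingAverageEfficiency lam σ δ) (nhds 0) (nhds 1) := by
  have hcont : ContinuousAt (movingAverageEfficiency lam σ δ) 0 := by
    unfold movingAverageEfficiency
    fun_prop (disch := simpa)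
  have hval : movingAverageEfficiency lam σ δ 0 = 1 := by
    simp [movingAverageEfficiency, hlam, hδ]
  exact hval ▸ hcont.tendsto

theorem tendsto_movingAverageEfficiency_atTop (lam σ δ : ℝ) :
    Tendsto (movingAverageEfficiency lam σ δ) atTop (nhds 0) := by
  have hlim : Tendsto (fun κ => lam / (κ + lam)) atTop (nhds 0) :=
    (tendsto_atTop_add_const_right _ lam tendsto_id).const_div_atTop lam
  refine hlim.zero_mul_isBoundedUnder_le (isBoundedUnder_of_eventually_le (a := 1) ?_)
  filter_upwards [eventually_ge_atTop 0, eventually_ge_atTop (-lam)] with κ hκ hκlam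
  have hsum : 0 ≤ κ + lam := by linarith
  have hle : δ ^ 2 ≤ δ ^ 2 + κ * σ ^ 2 * (κ + lam) := le_add_of_nonneg_right (by positivity)
  rw [Function.comp_apply, Real.norm_of_nonneg (by positivity)]
  exact div_le_one_of_le₀ hle (by positivity)

end GrowthRates

/-- Asymptotics in the mean-reversion speed `κ`:
`η(λ;κ)/ξ(κ) → 1` as `κ → 0⁺` and as `κ → ∞`. -/
theorem growth_rate_ratio_limits_in_kappa
    (lam σ δ μbar : ℝ) (hlam : 0 < lam) (hσ : 0 < σ) (hδ : 0 < δ) (hμ : μbar ≠ 0)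
    (η ξ : ℝ → ℝ)
    (hη : ∀ κ : ℝ, η κ =
      δ ^ 4 / (4 * κ * σ ^ 2) * (lam / (κ * σ ^ 2 * (κ + lam) ^ 2 + (κ + lam) * δ ^ 2))
        + μbar ^ 2 / (2 * σ ^ 2))
    (hξ : ∀ κ : ℝ, ξ κ = δ ^ 2 / (4 * κ * σ ^ 2) + μbar ^ 2 / (2 * σ ^ 2)) :
    Tendsto (fun κ : ℝ => η κ / ξ κ) (nhdsWithin 0 (Set.Ioi 0)) (nhds 1)
    ∧ Tendsto (fun κ : ℝ => η κ / ξ κ) atTop (nhds 1) := by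
  have hξ_eq : ∀ κ, ξ κ = driftFluctuationGrowthRate σ δ κ + μbar ^ 2 / (2 * σ ^ 2) := hξ
  simp only [hη, hξ_eq, ← driftFluctuationGrowthRate_mul_movingAverageEfficiency]
  constructor
  · exact tendsto_mul_add_div_add_of_tendsto_atTop
      (tendsto_driftFluctuationGrowthRate_nhdsGT_zero hσ.ne' hδ.ne') tendsto_const_nhds
      ((tendsto_movingAverageEfficiency_nhds_zero hlam.ne' σ hδ.ne').mono_left nhdsWithin_le_nhds)
  · exact tendsto_mul_add_div_add_of_tendsto_zero
      (tendsto_driftFluctuationGrowthRate_atTop σ δ) tendsto_const_nhds (by positivity)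
      (tendsto_movingAverageEfficiency_atTop lam σ δ)
end

section
/- Fix κ, λ, σ > 0 and μ̄ ≠ 0. Define, for δ > 0, η(λ; δ) := (δ⁴/(4κσ²)) · λ/(κσ²(κ+λ)² + (κ+λ)δ²) + μ̄²/(2σ²), ξ(δ) := δ²/(4κσ²) + μ̄²/(2σ²), and λ̂(δ) := √(κ² + δ²/σ²). Then lim_{δ→0⁺} η(λ; δ)/ξ(δ) = 1 and lim_{δ→∞} η(λ̂(δ); δ)/ξ(δ) = 1. -/
open Filter

/-!
At `δ = 0` both growth rates are continuous and equal to `μ̄² / (2σ²)`, which gives the first limit.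
For the second, substitute `δ² = σ² (L² - κ²)` with `L = λ̂(δ)`. The denominator of `η` then becomes
`σ² L (κ + L)²`, so that `4κ η = (L - κ)² + c` and `4κ ξ = L² - κ² + c` with `c = 2κ μ̄² / σ²`.
The ratio is thus a quotient of monic quadratics in `L`, and `L → ∞` as `δ → ∞`.
-/

open scoped Topology

/-- The growth rate `η(l; δ)` of the optimal exponential-moving-average strategy with averaging
parameter `l`, when the drift has mean-reversion speed `κ`, long-run mean `μ` and volatility `δ`,
and the stock has volatility `σ`. -/
noncomputable def emaGrowthRate (κ σ μ l δ : ℝ) : ℝ :=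
  δ ^ 4 / (4 * κ * σ ^ 2) * (l / (κ * σ ^ 2 * (κ + l) ^ 2 + (κ + l) * δ ^ 2)) + μ ^ 2 / (2 * σ ^ 2)

/-- The growth rate `ξ(δ)` when the drift is fully observed, the benchmark for `emaGrowthRate`. -/
noncomputable def fullInfoGrowthRate (κ σ μ δ : ℝ) : ℝ :=
  δ ^ 2 / (4 * κ * σ ^ 2) + μ ^ 2 / (2 * σ ^ 2)

/-- The growth-rate-maximizing averaging parameter `λ̂(δ)`. -/
noncomputable def optimalAveraging (κ σ δ : ℝ) : ℝ :=
  √(κ ^ 2 + δ ^ 2 / σ ^ 2)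

theorem tendsto_monic_quadratic_div_monic_quadratic_atTop {𝕜 : Type*} [NormedField 𝕜]
    [LinearOrder 𝕜] [IsStrictOrderedRing 𝕜] [OrderTopology 𝕜] (b c b' c' : 𝕜) :
    Tendsto (fun x : 𝕜 => (x ^ 2 + b * x + c) / (x ^ 2 + b' * x + c')) atTop (𝓝 1) := by
  open Polynomial in
  have h := div_tendsto_atTop_leadingCoeff_div_of_degree_eq
    (C 1 * X ^ 2 + C b * X + C c) (C 1 * X ^ 2 + C b' * X + C c')
    (by rw [degree_quadratic one_ne_zero, degree_quadratic one_ne_zero])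
  rw [leadingCoeff_quadratic one_ne_zero, leadingCoeff_quadratic one_ne_zero] at h
  simpa using h

section

variable {κ σ μ l δ : ℝ}

theorem emaGrowthRate_zero (κ σ μ l : ℝ) : emaGrowthRate κ σ μ l 0 = μ ^ 2 / (2 * σ ^ 2) := by
  simp [emaGrowthRate]

theorem fullInfoGrowthRate_zero (κ σ μ : ℝ) : fullInfoGrowthRate κ σ μ 0 = μ ^ 2 / (2 * σ ^ 2) := by
  simp [fullInfoGrowthRate]

theorem continuous_fullInfoGrowthRate (κ σ μ : ℝ) : Continuous (fullInfoGrowthRate κ σ μ) := by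
  unfold fullInfoGrowthRate
  fun_prop

theorem continuousAt_emaGrowthRate_zero (μ : ℝ) (hκ : κ ≠ 0) (hσ : σ ≠ 0) (hl : κ + l ≠ 0) :
    ContinuousAt (emaGrowthRate κ σ μ l) 0 := by
  have hden : κ * σ ^ 2 * (κ + l) ^ 2 + (κ + l) * (0 : ℝ) ^ 2 ≠ 0 := by simp [hκ, hσ, hl]
  unfold emaGrowthRate
  fun_prop (disch := exact hden)

theorem tendsto_emaGrowthRate_div_fullInfoGrowthRate_nhds_zero
    (hκ : κ ≠ 0) (hσ : σ ≠ 0) (hμ : μ ≠ 0) (hl : κ + l ≠ 0) :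
    Tendsto (fun δ => emaGrowthRate κ σ μ l δ / fullInfoGrowthRate κ σ μ δ) (𝓝 0) (𝓝 1) := by
  have hne : μ ^ 2 / (2 * σ ^ 2) ≠ 0 := by positivity
  have h := (continuousAt_emaGrowthRate_zero μ hκ hσ hl).tendsto.div
    ((continuous_fullInfoGrowthRate κ σ μ).tendsto 0) ((fullInfoGrowthRate_zero κ σ μ).trans_ne hne)
  rwa [emaGrowthRate_zero, fullInfoGrowthRate_zero, div_self hne] at h

theorem emaGrowthRate_of_sq_eq (hκ : κ ≠ 0) (hδ : δ ≠ 0)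
    (hl : δ ^ 2 = σ ^ 2 * (l ^ 2 - κ ^ 2)) :
    emaGrowthRate κ σ μ l δ = ((l - κ) ^ 2 + 2 * κ * μ ^ 2 / σ ^ 2) / (4 * κ) := by
  have hσ : σ ≠ 0 := by
    rintro rfl
    simp [hδ] at hl
  have hsum_ne : κ + l ≠ 0 := by
    intro h
    have hδ_sq : δ ^ 2 = 0 := by linear_combination hl + σ ^ 2 * (l - κ) * h
    exact pow_ne_zero 2 hδ hδ_sq
  have hl_ne : l ≠ 0 := by
    rintro rfl
    have : 0 < σ ^ 2 * κ ^ 2 := by positivity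
    nlinarith [sq_nonneg δ]
  have hden : κ * σ ^ 2 * (κ + l) ^ 2 + (κ + l) * δ ^ 2 = σ ^ 2 * l * (κ + l) ^ 2 := by
    rw [hl]
    ring
  have hnum : δ ^ 4 = (σ ^ 2 * (l - κ) * (κ + l)) ^ 2 := by
    linear_combination (δ ^ 2 + σ ^ 2 * (l ^ 2 - κ ^ 2)) * hl
  rw [emaGrowthRate, hden, hnum]
  field_simp
  ring

theorem fullInfoGrowthRate_of_sq_eq (hκ : κ ≠ 0) (hσ : σ ≠ 0)
    (hl : δ ^ 2 = σ ^ 2 * (l ^ 2 - κ ^ 2)) :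
    fullInfoGrowthRate κ σ μ δ = (l ^ 2 - κ ^ 2 + 2 * κ * μ ^ 2 / σ ^ 2) / (4 * κ) := by
  rw [fullInfoGrowthRate, hl]
  field_simp
  ring

theorem sq_eq_mul_optimalAveraging_sq_sub_sq (κ δ : ℝ) (hσ : σ ≠ 0) :
    δ ^ 2 = σ ^ 2 * (optimalAveraging κ σ δ ^ 2 - κ ^ 2) := by
  rw [optimalAveraging, Real.sq_sqrt (by positivity)]
  field_simp
  ring

theorem tendsto_optimalAveraging_atTop (κ : ℝ) (hσ : σ ≠ 0) :
    Tendsto (optimalAveraging κ σ) atTop atTop :=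
  Real.tendsto_sqrt_atTop.comp <| tendsto_atTop_add_const_left _ _ <|
    (tendsto_pow_atTop two_ne_zero).atTop_div_const (by positivity)

theorem tendsto_emaGrowthRate_optimalAveraging_div_fullInfoGrowthRate_atTop
    (hκ : κ ≠ 0) (hσ : σ ≠ 0) :
    Tendsto (fun δ => emaGrowthRate κ σ μ (optimalAveraging κ σ δ) δ / fullInfoGrowthRate κ σ μ δ)
      atTop (𝓝 1) := by
  set c := 2 * κ * μ ^ 2 / σ ^ 2 with hc
  have h := (tendsto_monic_quadratic_div_monic_quadratic_atTop
    (-2 * κ) (κ ^ 2 + c) 0 (c - κ ^ 2)).comp (tendsto_optimalAveraging_atTop κ hσ)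
  refine h.congr' ?_
  filter_upwards [eventually_ne_atTop 0] with δ hδ
  have hsq := sq_eq_mul_optimalAveraging_sq_sub_sq κ δ hσ
  rw [emaGrowthRate_of_sq_eq hκ hδ hsq, fullInfoGrowthRate_of_sq_eq hκ hσ hsq,
    div_div_div_cancel_right₀ (by positivity), ← hc, Function.comp_apply]
  congr 1 <;> ring

theorem growth_rate_ratio_limits_in_delta_general
    (hκ : κ ≠ 0) (hσ : σ ≠ 0) (hμ : μ ≠ 0) (hl : κ + l ≠ 0) :
    Tendsto (fun δ => emaGrowthRate κ σ μ l δ / fullInfoGrowthRate κ σ μ δ) (𝓝 0) (𝓝 1) ∧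
    Tendsto (fun δ => emaGrowthRate κ σ μ (optimalAveraging κ σ δ) δ / fullInfoGrowthRate κ σ μ δ)
      atTop (𝓝 1) :=
  ⟨tendsto_emaGrowthRate_div_fullInfoGrowthRate_nhds_zero hκ hσ hμ hl,
    tendsto_emaGrowthRate_optimalAveraging_div_fullInfoGrowthRate_atTop hκ hσ⟩

end

/-- Asymptotics in the drift volatility `δ`:
`η(λ;δ)/ξ(δ) → 1` as `δ → 0⁺`, and `η(λ̂(δ);δ)/ξ(δ) → 1` as `δ → ∞`,
where `λ̂(δ) = √(κ² + δ²/σ²)`. -/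
theorem growth_rate_ratio_limits_in_delta
    (κ lam σ μbar : ℝ) (hκ : 0 < κ) (hlam : 0 < lam) (hσ : 0 < σ) (hμ : μbar ≠ 0)
    (η : ℝ → ℝ → ℝ) (ξ lamhat : ℝ → ℝ)
    (hη : ∀ l δ : ℝ, η l δ =
      δ ^ 4 / (4 * κ * σ ^ 2) * (l / (κ * σ ^ 2 * (κ + l) ^ 2 + (κ + l) * δ ^ 2))
        + μbar ^ 2 / (2 * σ ^ 2))
    (hξ : ∀ δ : ℝ, ξ δ = δ ^ 2 / (4 * κ * σ ^ 2) + μbar ^ 2 / (2 * σ ^ 2))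
    (hlamhat : ∀ δ : ℝ, lamhat δ = Real.sqrt (κ ^ 2 + δ ^ 2 / σ ^ 2)) :
    Tendsto (fun δ : ℝ => η lam δ / ξ δ) (nhdsWithin 0 (Set.Ioi 0)) (nhds 1)
    ∧ Tendsto (fun δ : ℝ => η (lamhat δ) δ / ξ δ) atTop (nhds 1) := by
  obtain rfl : η = emaGrowthRate κ σ μbar := funext₂ hη
  obtain rfl : ξ = fullInfoGrowthRate κ σ μbar := funext hξ
  obtain rfl : lamhat = optimalAveraging κ σ := funext hlamhat
  exact (growth_rate_ratio_limits_in_delta_general hκ.ne' hσ.ne' hμ (by positivity)).imp_left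
    (·.mono_left nhdsWithin_le_nhds)
end

section
/- Let κ, λ, σ, δ > 0 and μ̄ ∈ ℝ. Define a_∞ := λδ²/(σ²·(κ(κ+λ)σ² + δ²)), b_∞ := μ̄/σ² − ((2μ̄ − σ²)/(2λ))·a_∞, m̄₂ := (2μ̄ − σ²)/(2λ), v̄₂ := σ²/(2λ) + δ²/(2κλ(κ+λ)), and m̄₃ := μ̄·m̄₂ + δ²/(2κ(κ+λ)). Then a_∞·m̄₃ + b_∞·μ̄ − (σ²/2)·(a_∞²·(m̄₂² + v̄₂) + 2a_∞·b_∞·m̄₂ + b_∞²) = (δ⁴/(4κσ²)) · λ/(κσ²(κ+λ)² + (κ+λ)δ²) + μ̄²/(2σ²). -/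
/-!
Write `c` for the stationary covariance of the drift with `Z`, so that `E[μ Z] = μbar m₂ + c`. Since
`E[f(Z)] = a m₂ + b` and `Var f(Z) = a² v₂`, completing the square in `a` and in `a m₂ + b` shows
that the growth rate of `f(z) = a z + b` is `c² / (2σ²v₂) + μbar² / (2σ²)` minus two square terms.
Both squares vanish for `a = c / (σ²v₂)` and `a m₂ + b = μbar / σ²`, and these are the
equations defining `a_∞` and `b_∞`.
-/

section Field

variable {K : Type*} [Field K]

/-- The stationary value of `E[μ f(Z) - (q / 2) f(Z)²]` for the affine strategy `f(z) = a z + b`,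
in terms of the squared volatility `q` and the moments `E[μ] = μ`, `E[Z] = m`, `Var[Z] = v` and
`E[μ Z] = p`, which are passed as numbers. -/
def affineGrowthRate (q μ m v p a b : K) : K :=
  a * p + b * μ - q / 2 * (a ^ 2 * (m ^ 2 + v) + 2 * a * b * m + b ^ 2)

/-- The stationary covariance of an Ornstein–Uhlenbeck drift (mean-reversion speed `κ`, squared
volatility `d`) with the difference between the log-price and its exponential moving average of
parameter `lam`; it is `m̄₃ - μbar m̄₂` in the paper's notation. -/
def driftDifferenceCov (κ lam d : K) : K :=
  d / (2 * κ * (κ + lam))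

/-- The stationary variance `v̄₂` of the difference between the log-price and its exponential
moving average, where `q` and `d` are the squared volatilities of the log-price and of its
Ornstein–Uhlenbeck drift. -/
def differenceVariance (κ lam q d : K) : K :=
  q / (2 * lam) + d / (2 * κ * lam * (κ + lam))

section AffineGrowthRate

variable [NeZero (2 : K)] {q v : K}

theorem affineGrowthRate_eq_sub_squares (hq : q ≠ 0) (hv : v ≠ 0) (μ m c a b : K) :
    affineGrowthRate q μ m v (μ * m + c) a b =
      c ^ 2 / (2 * q * v) + μ ^ 2 / (2 * q)
        - q / 2 * (v * (a - c / (q * v)) ^ 2 + (a * m + b - μ / q) ^ 2) := by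
  unfold affineGrowthRate
  field_simp
  ring

theorem affineGrowthRate_optimal (hq : q ≠ 0) (hv : v ≠ 0) (μ m c : K) :
    affineGrowthRate q μ m v (μ * m + c) (c / (q * v)) (μ / q - m * (c / (q * v))) =
      c ^ 2 / (2 * q * v) + μ ^ 2 / (2 * q) := by
  rw [affineGrowthRate_eq_sub_squares hq hv]
  ring

end AffineGrowthRate

section StationaryMoments

variable {κ lam : K}

theorem differenceVariance_eq_div (hκ : κ ≠ 0) (hs : κ + lam ≠ 0) (q d : K) :
    differenceVariance κ lam q d =
      (κ * (κ + lam) * q + d) / (2 * κ * lam * (κ + lam)) := by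
  unfold differenceVariance
  field_simp

variable [NeZero (2 : K)]

theorem differenceVariance_ne_zero {q d : K} (hκ : κ ≠ 0) (hlam : lam ≠ 0) (hs : κ + lam ≠ 0)
    (hD : κ * (κ + lam) * q + d ≠ 0) : differenceVariance κ lam q d ≠ 0 := by
  rw [differenceVariance_eq_div hκ hs]
  simp [hκ, hlam, hs, hD, NeZero.ne (2 : K)]

theorem driftDifferenceCov_div_differenceVariance (hκ : κ ≠ 0) (hs : κ + lam ≠ 0) (q d : K) :
    driftDifferenceCov κ lam d / (q * differenceVariance κ lam q d) =
      lam * d / (q * (κ * (κ + lam) * q + d)) := by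
  rw [differenceVariance_eq_div hκ hs, driftDifferenceCov]
  field_simp

theorem driftDifferenceCov_sq_div_differenceVariance (hκ : κ ≠ 0) (hs : κ + lam ≠ 0) (q d : K) :
    driftDifferenceCov κ lam d ^ 2 / (2 * q * differenceVariance κ lam q d) =
      d ^ 2 / (4 * κ * q) * (lam / (κ * q * (κ + lam) ^ 2 + (κ + lam) * d)) := by
  have factor : κ * q * (κ + lam) ^ 2 + (κ + lam) * d =
      (κ + lam) * (κ * (κ + lam) * q + d) := by ring
  have four_eq : (4 : K) = 2 * 2 := by norm_num
  rw [differenceVariance_eq_div hκ hs, driftDifferenceCov, factor, four_eq]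
  field_simp

end StationaryMoments

theorem limiting_affine_strategy_growth_identity_general [NeZero (2 : K)]
    (κ lam σ δ μbar aInf bInf m₂ v₂ m₃ : K)
    (hκ : κ ≠ 0) (hlam : lam ≠ 0) (hs : κ + lam ≠ 0) (hσ : σ ≠ 0)
    (hD : κ * (κ + lam) * σ ^ 2 + δ ^ 2 ≠ 0)
    (haInf : aInf = lam * δ ^ 2 / (σ ^ 2 * (κ * (κ + lam) * σ ^ 2 + δ ^ 2)))
    (hbInf : bInf = μbar / σ ^ 2 - (2 * μbar - σ ^ 2) / (2 * lam) * aInf)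
    (hm₂ : m₂ = (2 * μbar - σ ^ 2) / (2 * lam))
    (hv₂ : v₂ = σ ^ 2 / (2 * lam) + δ ^ 2 / (2 * κ * lam * (κ + lam)))
    (hm₃ : m₃ = μbar * m₂ + δ ^ 2 / (2 * κ * (κ + lam))) :
    aInf * m₃ + bInf * μbar
        - σ ^ 2 / 2 * (aInf ^ 2 * (m₂ ^ 2 + v₂) + 2 * aInf * bInf * m₂ + bInf ^ 2)
      = δ ^ 4 / (4 * κ * σ ^ 2) * (lam / (κ * σ ^ 2 * (κ + lam) ^ 2 + (κ + lam) * δ ^ 2))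
        + μbar ^ 2 / (2 * σ ^ 2) := by
  change v₂ = differenceVariance κ lam (σ ^ 2) (δ ^ 2) at hv₂
  change m₃ = μbar * m₂ + driftDifferenceCov κ lam (δ ^ 2) at hm₃
  change affineGrowthRate (σ ^ 2) μbar m₂ v₂ m₃ aInf bInf = _
  have hv₂_ne : v₂ ≠ 0 := hv₂ ▸ differenceVariance_ne_zero hκ hlam hs hD
  have slope_eq : aInf = driftDifferenceCov κ lam (δ ^ 2) / (σ ^ 2 * v₂) := by
    rw [haInf, hv₂, driftDifferenceCov_div_differenceVariance hκ hs]
  have growth_eq := driftDifferenceCov_sq_div_differenceVariance hκ hs (σ ^ 2) (δ ^ 2)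
  rw [← hv₂, ← pow_mul] at growth_eq
  rw [hbInf, ← hm₂, hm₃, slope_eq, affineGrowthRate_optimal (pow_ne_zero 2 hσ) hv₂_ne, growth_eq]

end Field

/-- The long-run average log-growth of the limiting affine strategy
`f(z) = a_∞ z + b_∞` equals the optimal growth rate `η(λ)`. -/
theorem limiting_affine_strategy_growth_identity
    (κ lam σ δ μbar aInf bInf m₂ v₂ m₃ : ℝ)
    (hκ : 0 < κ) (hlam : 0 < lam) (hσ : 0 < σ) (hδ : 0 < δ)
    (haInf : aInf = lam * δ ^ 2 / (σ ^ 2 * (κ * (κ + lam) * σ ^ 2 + δ ^ 2)))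
    (hbInf : bInf = μbar / σ ^ 2 - (2 * μbar - σ ^ 2) / (2 * lam) * aInf)
    (hm₂ : m₂ = (2 * μbar - σ ^ 2) / (2 * lam))
    (hv₂ : v₂ = σ ^ 2 / (2 * lam) + δ ^ 2 / (2 * κ * lam * (κ + lam)))
    (hm₃ : m₃ = μbar * m₂ + δ ^ 2 / (2 * κ * (κ + lam))) :
    aInf * m₃ + bInf * μbar
        - σ ^ 2 / 2 * (aInf ^ 2 * (m₂ ^ 2 + v₂) + 2 * aInf * bInf * m₂ + bInf ^ 2)
      = δ ^ 4 / (4 * κ * σ ^ 2) * (lam / (κ * σ ^ 2 * (κ + lam) ^ 2 + (κ + lam) * δ ^ 2))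
        + μbar ^ 2 / (2 * σ ^ 2) := by
  exact limiting_affine_strategy_growth_identity_general κ lam σ δ μbar aInf bInf m₂ v₂ m₃ hκ.ne'
    hlam.ne' (by positivity) hσ.ne' (by positivity) haInf hbInf hm₂ hv₂ hm₃
end

section
/- Let α, β, λ > 0 and ρ₁ < ρ₂ be real numbers, and let c > 0 and d := βc/α. For z ∈ (ρ₁/λ, ρ₂/λ) define l(z) := (λz − ρ₁)^{α/λ − 1}·(ρ₂ − λz)^{β/λ − 1}, and for x ∈ [ρ₁/λ, ρ₂/λ] define u(x) := c·∫_{ρ₁/λ}^{x} (ρ₂ − λz)·l(z) dz and v(x) := d·∫_{ρ₁/λ}^{x} (λz − ρ₁)·l(z) dz. Then for every x ∈ (ρ₁/λ, ρ₂/λ), u is differentiable at x with u'(x) = c(ρ₂ − λx)l(x), v is differentiable at x with v'(x) = d(λx − ρ₁)l(x), and the pair (u, v) satisfies the ODE system (ρ₁ − λx)·u'(x) + α·u(x) − α·v(x) = 0 and (ρ₂ − λx)·v'(x) + β·v(x) − β·u(x) = 0. -/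
/-!
Put `p = α / λ`, `q = β / λ` and `W(z) = (λz - ρ₁)^p (ρ₂ - λz)^q`. Then `W` vanishes at `ρ₁ / λ`,
`W(z) = (λz - ρ₁) (ρ₂ - λz) l(z)`, and `W'(z) = (α (ρ₂ - λz) - β (λz - ρ₁)) l(z)`. Integrating `W'`
from `ρ₁ / λ` to `x` gives `α I(x) - β J(x) = W(x)` for the integrals `I`, `J` in `u = c I`,
`v = d J`. As `α d = β c`, both equations of the system are multiples of this identity.
-/

open MeasureTheory Set

/-- The unnormalised Beta weight `(λz - ρ₁)^p (ρ₂ - λz)^q`, transported to the interval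
`(ρ₁ / λ, ρ₂ / λ)`. The exponents are those of the factors, so the density of the Beta distribution
with parameters `p` and `q` has exponents `p - 1` and `q - 1`. -/
noncomputable def betaWeight (lam ρ₁ ρ₂ p q z : ℝ) : ℝ :=
  (lam * z - ρ₁) ^ p * (ρ₂ - lam * z) ^ q

section BetaWeight

variable {lam ρ₁ ρ₂ p q x : ℝ}

theorem betaWeight_left_endpoint (hlam : lam ≠ 0) (hp : p ≠ 0) :
    betaWeight lam ρ₁ ρ₂ p q (ρ₁ / lam) = 0 := by
  rw [betaWeight, mul_div_cancel₀ ρ₁ hlam, sub_self, Real.zero_rpow hp, zero_mul]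

theorem betaWeight_eq_mul_betaWeight_sub_one (h₁ : lam * x - ρ₁ ≠ 0) (h₂ : ρ₂ - lam * x ≠ 0) :
    betaWeight lam ρ₁ ρ₂ p q x =
      (lam * x - ρ₁) * (ρ₂ - lam * x) * betaWeight lam ρ₁ ρ₂ (p - 1) (q - 1) x := by
  rw [betaWeight, betaWeight, Real.rpow_sub_one h₁, Real.rpow_sub_one h₂]
  field_simp

theorem hasDerivAt_betaWeight (h₁ : lam * x - ρ₁ ≠ 0) (h₂ : ρ₂ - lam * x ≠ 0) :
    HasDerivAt (betaWeight lam ρ₁ ρ₂ p q)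
      (lam * p * ((ρ₂ - lam * x) * betaWeight lam ρ₁ ρ₂ (p - 1) (q - 1) x) -
        lam * q * ((lam * x - ρ₁) * betaWeight lam ρ₁ ρ₂ (p - 1) (q - 1) x)) x := by
  have hleft : HasDerivAt (fun z ↦ lam * z - ρ₁) lam x :=
    (hasDerivAt_const_mul lam).sub_const ρ₁
  have hright : HasDerivAt (fun z ↦ ρ₂ - lam * z) (-lam) x :=
    (hasDerivAt_const_mul lam).const_sub ρ₂
  refine ((hleft.rpow_const (p := p) (.inl h₁)).mul
    (hright.rpow_const (p := q) (.inl h₂))).congr_deriv ?_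
  rw [betaWeight, Real.rpow_sub_one h₁, Real.rpow_sub_one h₂]
  field_simp
  ring

theorem continuousAt_betaWeight (h₁ : lam * x - ρ₁ ≠ 0) (h₂ : ρ₂ - lam * x ≠ 0) :
    ContinuousAt (betaWeight lam ρ₁ ρ₂ p q) x :=
  (hasDerivAt_betaWeight h₁ h₂).continuousAt

theorem measurable_betaWeight : Measurable (betaWeight lam ρ₁ ρ₂ p q) := by
  unfold betaWeight
  fun_prop

theorem mul_sub_pos_of_div_lt (hlam : 0 < lam) (hx : ρ₁ / lam < x) : 0 < lam * x - ρ₁ :=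
  sub_pos.2 ((div_lt_iff₀' hlam).1 hx)

theorem sub_mul_pos_of_lt_div (hlam : 0 < lam) (hx : x < ρ₂ / lam) : 0 < ρ₂ - lam * x :=
  sub_pos.2 ((lt_div_iff₀' hlam).1 hx)

theorem continuousOn_rpow_sub_mul (hlam : 0 < lam) (hx : x < ρ₂ / lam) :
    ContinuousOn (fun z ↦ (ρ₂ - lam * z) ^ q) (Iic x) :=
  ContinuousOn.rpow_const (by fun_prop) fun _ hz ↦
    .inl (sub_mul_pos_of_lt_div hlam (hz.trans_lt hx)).ne'

theorem intervalIntegrable_betaWeight (hlam : 0 < lam) (hp : -1 < p)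
    (hx : x ∈ Ico (ρ₁ / lam) (ρ₂ / lam)) :
    IntervalIntegrable (betaWeight lam ρ₁ ρ₂ p q) volume (ρ₁ / lam) x := by
  have hleft : IntervalIntegrable (fun z ↦ (lam * z - ρ₁) ^ p) volume (ρ₁ / lam) x := by
    have hrpow : IntervalIntegrable (fun z : ℝ ↦ z ^ p) volume 0 (lam * x - ρ₁) :=
      intervalIntegral.intervalIntegrable_rpow' hp
    simpa [mul_div_cancel_left₀ x hlam.ne'] using
      (hrpow.comp_sub_right ρ₁).comp_mul_left (c := lam)
  refine hleft.mul_continuousOn ((continuousOn_rpow_sub_mul hlam hx.2).mono ?_)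
  rw [uIcc_of_le hx.1]
  exact Icc_subset_Iic_self

theorem intervalIntegrable_mul_betaWeight {g : ℝ → ℝ} (hg : Continuous g) (hlam : 0 < lam)
    (hp : -1 < p) (hx : x ∈ Ico (ρ₁ / lam) (ρ₂ / lam)) :
    IntervalIntegrable (fun z ↦ g z * betaWeight lam ρ₁ ρ₂ p q z) volume (ρ₁ / lam) x :=
  (intervalIntegrable_betaWeight hlam hp hx).continuousOn_mul hg.continuousOn

theorem hasDerivAt_integral_mul_betaWeight {g : ℝ → ℝ} (hg : Continuous g) (hlam : 0 < lam)
    (hp : -1 < p) (hx : x ∈ Ioo (ρ₁ / lam) (ρ₂ / lam)) :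
    HasDerivAt (fun y ↦ ∫ z in (ρ₁ / lam)..y, g z * betaWeight lam ρ₁ ρ₂ p q z)
      (g x * betaWeight lam ρ₁ ρ₂ p q x) x :=
  intervalIntegral.integral_hasDerivAt_right
    (intervalIntegrable_mul_betaWeight hg hlam hp (Ioo_subset_Ico_self hx))
    (hg.measurable.mul measurable_betaWeight).stronglyMeasurable.stronglyMeasurableAtFilter
    (hg.continuousAt.mul (continuousAt_betaWeight
      (mul_sub_pos_of_div_lt hlam hx.1).ne' (sub_mul_pos_of_lt_div hlam hx.2).ne'))

theorem continuousOn_betaWeight (hlam : 0 < lam) (hp : 0 ≤ p) (hx : x < ρ₂ / lam) :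
    ContinuousOn (betaWeight lam ρ₁ ρ₂ p q) (Iic x) :=
  (ContinuousOn.rpow_const (by fun_prop) fun _ _ ↦ .inr hp).mul
    (continuousOn_rpow_sub_mul hlam hx)

theorem mul_integral_sub_mul_integral_eq_betaWeight (hlam : 0 < lam) (hp : 0 < p)
    (hx : x ∈ Ico (ρ₁ / lam) (ρ₂ / lam)) :
    lam * p * (∫ z in (ρ₁ / lam)..x,
        (ρ₂ - lam * z) * betaWeight lam ρ₁ ρ₂ (p - 1) (q - 1) z) -
      lam * q * (∫ z in (ρ₁ / lam)..x,
        (lam * z - ρ₁) * betaWeight lam ρ₁ ρ₂ (p - 1) (q - 1) z) =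
      betaWeight lam ρ₁ ρ₂ p q x := by
  have hp' : -1 < p - 1 := by linarith
  have hright := (intervalIntegrable_mul_betaWeight (q := q - 1)
    (g := fun z ↦ ρ₂ - lam * z) (by fun_prop) hlam hp' hx).const_mul (lam * p)
  have hleft := (intervalIntegrable_mul_betaWeight (q := q - 1)
    (g := fun z ↦ lam * z - ρ₁) (by fun_prop) hlam hp' hx).const_mul (lam * q)
  have hFTC := intervalIntegral.integral_eq_sub_of_hasDerivAt_of_le hx.1
    ((continuousOn_betaWeight hlam hp.le hx.2).mono Icc_subset_Iic_self)
    (fun z hz ↦ hasDerivAt_betaWeight (mul_sub_pos_of_div_lt hlam hz.1).ne'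
      (sub_mul_pos_of_lt_div hlam (hz.2.trans hx.2)).ne')
    (hright.sub hleft)
  rwa [intervalIntegral.integral_sub hright hleft, intervalIntegral.integral_const_mul,
    intervalIntegral.integral_const_mul, betaWeight_left_endpoint hlam.ne' hp.ne', sub_zero] at hFTC

end BetaWeight

theorem beta_cdf_ode_system_general
    (α β lam ρ₁ ρ₂ c d : ℝ) (hα : 0 < α) (hlam : 0 < lam) (hd : d = β * c / α)
    (l u v : ℝ → ℝ)
    (hl : ∀ z, l z = (lam * z - ρ₁) ^ (α / lam - 1) * (ρ₂ - lam * z) ^ (β / lam - 1))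
    (hu : ∀ x, u x = c * ∫ z in (ρ₁ / lam)..x, (ρ₂ - lam * z) * l z)
    (hv : ∀ x, v x = d * ∫ z in (ρ₁ / lam)..x, (lam * z - ρ₁) * l z) :
    ∀ x ∈ Set.Ioo (ρ₁ / lam) (ρ₂ / lam),
      HasDerivAt u (c * (ρ₂ - lam * x) * l x) x
      ∧ HasDerivAt v (d * (lam * x - ρ₁) * l x) x
      ∧ (ρ₁ - lam * x) * (c * (ρ₂ - lam * x) * l x) + α * u x - α * v x = 0
      ∧ (ρ₂ - lam * x) * (d * (lam * x - ρ₁) * l x) + β * v x - β * u x = 0 := by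
  intro x hx
  have hl_eq : l = betaWeight lam ρ₁ ρ₂ (α / lam - 1) (β / lam - 1) := funext hl
  have hp : 0 < α / lam := div_pos hα hlam
  have hp' : -1 < α / lam - 1 := by linarith
  have hαd : α * d = β * c := by rw [hd, mul_div_cancel₀ _ hα.ne']
  have hW : α * (∫ z in (ρ₁ / lam)..x, (ρ₂ - lam * z) * l z) -
      β * (∫ z in (ρ₁ / lam)..x, (lam * z - ρ₁) * l z) =
      (lam * x - ρ₁) * (ρ₂ - lam * x) * l x := by
    rw [hl_eq, ← betaWeight_eq_mul_betaWeight_sub_one (mul_sub_pos_of_div_lt hlam hx.1).ne'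
        (sub_mul_pos_of_lt_div hlam hx.2).ne',
      ← mul_integral_sub_mul_integral_eq_betaWeight hlam hp (Ioo_subset_Ico_self hx),
      mul_div_cancel₀ α hlam.ne', mul_div_cancel₀ β hlam.ne']
  refine ⟨?_, ?_, ?_, ?_⟩
  · rw [funext hu, hl_eq, mul_assoc]
    exact (hasDerivAt_integral_mul_betaWeight (by fun_prop) hlam hp' hx).const_mul c
  · rw [funext hv, hl_eq, mul_assoc]
    exact (hasDerivAt_integral_mul_betaWeight (by fun_prop) hlam hp' hx).const_mul d
  · rw [hu, hv]
    linear_combination c * hW - (∫ z in (ρ₁ / lam)..x, (lam * z - ρ₁) * l z) * hαd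
  · rw [hu, hv]
    linear_combination -d * hW + (∫ z in (ρ₁ / lam)..x, (ρ₂ - lam * z) * l z) * hαd

/-- The Beta-type functions `u, v` are differentiable on `(ρ₁/λ, ρ₂/λ)`, with the
stated derivatives, and solve the ODE system from the two-state CTMC dynamics. -/
theorem beta_cdf_ode_system
    (α β lam ρ₁ ρ₂ c d : ℝ) (hα : 0 < α) (hβ : 0 < β) (hlam : 0 < lam) (hρ : ρ₁ < ρ₂)
    (hc : 0 < c) (hd : d = β * c / α)
    (l u v : ℝ → ℝ)
    (hl : ∀ z, l z = (lam * z - ρ₁) ^ (α / lam - 1) * (ρ₂ - lam * z) ^ (β / lam - 1))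
    (hu : ∀ x, u x = c * ∫ z in (ρ₁ / lam)..x, (ρ₂ - lam * z) * l z)
    (hv : ∀ x, v x = d * ∫ z in (ρ₁ / lam)..x, (lam * z - ρ₁) * l z) :
    ∀ x ∈ Set.Ioo (ρ₁ / lam) (ρ₂ / lam),
      HasDerivAt u (c * (ρ₂ - lam * x) * l x) x
      ∧ HasDerivAt v (d * (lam * x - ρ₁) * l x) x
      ∧ (ρ₁ - lam * x) * (c * (ρ₂ - lam * x) * l x) + α * u x - α * v x = 0
      ∧ (ρ₂ - lam * x) * (d * (lam * x - ρ₁) * l x) + β * v x - β * u x = 0 :=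
  beta_cdf_ode_system_general α β lam ρ₁ ρ₂ c d hα hlam hd l u v hl hu hv
end

section
/- Let κ, λ, δ, σ > 0 with κ ≠ λ, and let μ̄, m₀, v₀ ∈ ℝ. Define for t ≥ 0: m₁(t) := μ̄ + (m₀ − μ̄)e^{−κt}; v₁(t) := δ²/(2κ) + (v₀ − δ²/(2κ))e^{−2κt}; m₂(t) := (2μ̄ − σ²)/(2λ) + ((λm₀ − κμ̄)/(λ(κ−λ)) + σ²/(2λ))e^{−λt} + ((μ̄ − m₀)/(κ−λ))e^{−κt}; v₂(t) := σ²/(2λ) + δ²/(2κλ(κ+λ)) + ((v₀ − δ²/(2λ))/(κ−λ)² − σ²/(2λ))e^{−2λt} + ((v₀ − δ²/(2κ))/(κ−λ)²)e^{−2κt} − (2(v₀ − δ²/(κ+λ))/(κ−λ)²)e^{−(κ+λ)t}; and m₃(t) := (1/λ)(κμ̄/(κ−λ) − σ²/2)(1 − e^{−λt})·m₁(t) + (e^{−λt}/(κ−λ))·(μ̄(1 − e^{−κt})m₀ + e^{−κt}(m₀² + v₀)) − (v₁(t) + m₁(t)²)/(κ−λ) + (δ²/(κ² − λ²))(1 −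 e^{−(κ+λ)t}). Then, as t → ∞, (m₃(t) − m₁(t)m₂(t))/(v₂(t)σ²) converges to a_∞ := λδ²/(σ²(κ(κ+λ)σ² + δ²)), and m₁(t)/σ² − m₂(t)(m₃(t) − m₁(t)m₂(t))/(v₂(t)σ²) converges to b_∞ := μ̄/σ² − ((2μ̄ − σ²)/(2λ))·a_∞. -/
open Filter

/-!
Once the mean contributions cancel, the covariance of the drift and the trend signal solves
`c' = -(κ + lam) c + v₁` with `c 0 = 0`, hence is a constant plus multiples of `exp (-2κt)` and
`exp (-(κ + lam)t)`. Every moment entering the optimal coefficients is therefore a constant plus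
decaying exponentials, and since the limiting variance of the signal is positive, the limits of the
coefficients are the same rational expressions in these constants.
-/

open Real Topology

namespace OUTrend

theorem tendsto_exp_mul_atTop_of_neg {c : ℝ} (hc : c < 0) :
    Tendsto (fun t : ℝ => exp (c * t)) atTop (𝓝 0) :=
  tendsto_exp_atBot.comp (tendsto_id.const_mul_atTop_of_neg hc)

/-- The mean `m₁` of the Ornstein–Uhlenbeck drift `μ`. -/
noncomputable def driftMean (κ μbar m₀ t : ℝ) : ℝ :=
  μbar + (m₀ - μbar) * exp (-κ * t)

/-- The variance `v₁` of the Ornstein–Uhlenbeck drift `μ`. -/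
noncomputable def driftVar (κ δ v₀ t : ℝ) : ℝ :=
  δ ^ 2 / (2 * κ) + (v₀ - δ ^ 2 / (2 * κ)) * exp (-2 * κ * t)

/-- The mean `m₂` of the trend signal `Z`, the gap between the log-price and its exponential moving
average. -/
noncomputable def signalMean (κ lam σ μbar m₀ t : ℝ) : ℝ :=
  (2 * μbar - σ ^ 2) / (2 * lam)
    + ((lam * m₀ - κ * μbar) / (lam * (κ - lam)) + σ ^ 2 / (2 * lam)) * exp (-lam * t)
    + (μbar - m₀) / (κ - lam) * exp (-κ * t)

/-- The variance `v₂` of the trend signal `Z`. -/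
noncomputable def signalVar (κ lam δ σ v₀ t : ℝ) : ℝ :=
  σ ^ 2 / (2 * lam) + δ ^ 2 / (2 * κ * lam * (κ + lam))
    + ((v₀ - δ ^ 2 / (2 * lam)) / (κ - lam) ^ 2 - σ ^ 2 / (2 * lam)) * exp (-2 * lam * t)
    + (v₀ - δ ^ 2 / (2 * κ)) / (κ - lam) ^ 2 * exp (-2 * κ * t)
    - 2 * (v₀ - δ ^ 2 / (κ + lam)) / (κ - lam) ^ 2 * exp (-(κ + lam) * t)

/-- The mixed moment `m₃`, the expectation of the product `μ Z` of drift and trend signal. -/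
noncomputable def driftSignalMoment (κ lam δ σ μbar m₀ v₀ t : ℝ) : ℝ :=
  1 / lam * (κ * μbar / (κ - lam) - σ ^ 2 / 2) * (1 - exp (-lam * t)) * driftMean κ μbar m₀ t
    + exp (-lam * t) / (κ - lam)
        * (μbar * (1 - exp (-κ * t)) * m₀ + exp (-κ * t) * (m₀ ^ 2 + v₀))
    - (driftVar κ δ v₀ t + driftMean κ μbar m₀ t ^ 2) / (κ - lam)
    + δ ^ 2 / (κ ^ 2 - lam ^ 2) * (1 - exp (-(κ + lam) * t))

/-- The covariance of the drift `μ` and the trend signal `Z`, written in the basis of exponentials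
so that its limit can be read off; `driftSignalMoment_sub_mul` identifies it with `m₃ - m₁ m₂`. -/
noncomputable def driftSignalCov (κ lam δ v₀ t : ℝ) : ℝ :=
  δ ^ 2 / (2 * κ * (κ + lam))
    - (v₀ - δ ^ 2 / (2 * κ)) / (κ - lam) * exp (-2 * κ * t)
    + (v₀ - δ ^ 2 / (κ + lam)) / (κ - lam) * exp (-(κ + lam) * t)

variable {κ lam : ℝ}

theorem driftSignalMoment_sub_mul (δ σ μbar m₀ v₀ t : ℝ)
    (hκ : κ ≠ 0) (hlam : lam ≠ 0) (hadd : κ + lam ≠ 0) (hne : κ ≠ lam) :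
    driftSignalMoment κ lam δ σ μbar m₀ v₀ t
        - driftMean κ μbar m₀ t * signalMean κ lam σ μbar m₀ t
      = driftSignalCov κ lam δ v₀ t := by
  have hsub : κ - lam ≠ 0 := sub_ne_zero.mpr hne
  have exp_two : exp (-2 * κ * t) = exp (-κ * t) ^ 2 := by
    rw [← exp_nat_mul]; push_cast; ring_nf
  have exp_add : exp (-(κ + lam) * t) = exp (-κ * t) * exp (-lam * t) := by
    rw [← Real.exp_add]; ring_nf
  have sq_sub : κ ^ 2 - lam ^ 2 = (κ + lam) * (κ - lam) := sq_sub_sq κ lam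
  simp only [driftSignalMoment, driftMean, driftVar, signalMean, driftSignalCov, exp_two, exp_add,
    sq_sub]
  field_simp
  ring

theorem tendsto_driftMean (μbar m₀ : ℝ) (hκ : 0 < κ) :
    Tendsto (driftMean κ μbar m₀) atTop (𝓝 μbar) := by
  have decay_κ := tendsto_exp_mul_atTop_of_neg (neg_lt_zero.mpr hκ)
  unfold driftMean
  simpa only [mul_zero, add_zero] using (decay_κ.const_mul (m₀ - μbar)).const_add μbar

theorem tendsto_signalMean (σ μbar m₀ : ℝ) (hκ : 0 < κ) (hlam : 0 < lam) :
    Tendsto (signalMean κ lam σ μbar m₀) atTop (𝓝 ((2 * μbar - σ ^ 2) / (2 * lam))) := by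
  have decay_κ := tendsto_exp_mul_atTop_of_neg (neg_lt_zero.mpr hκ)
  have decay_lam := tendsto_exp_mul_atTop_of_neg (neg_lt_zero.mpr hlam)
  unfold signalMean
  simpa only [mul_zero, add_zero] using
    ((decay_lam.const_mul _).const_add _).add (decay_κ.const_mul _)

theorem tendsto_signalVar (δ σ v₀ : ℝ) (hκ : 0 < κ) (hlam : 0 < lam) :
    Tendsto (signalVar κ lam δ σ v₀) atTop
      (𝓝 (σ ^ 2 / (2 * lam) + δ ^ 2 / (2 * κ * lam * (κ + lam)))) := by
  have decay_two_κ := tendsto_exp_mul_atTop_of_neg (show -2 * κ < 0 by linarith)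
  have decay_two_lam := tendsto_exp_mul_atTop_of_neg (show -2 * lam < 0 by linarith)
  have decay_add := tendsto_exp_mul_atTop_of_neg (show -(κ + lam) < 0 by linarith)
  unfold signalVar
  simpa only [mul_zero, add_zero, sub_zero] using
    (((decay_two_lam.const_mul _).const_add _).add (decay_two_κ.const_mul _)).sub
      (decay_add.const_mul _)

theorem tendsto_driftSignalCov (δ v₀ : ℝ) (hκ : 0 < κ) (hadd : 0 < κ + lam) :
    Tendsto (driftSignalCov κ lam δ v₀) atTop (𝓝 (δ ^ 2 / (2 * κ * (κ + lam)))) := by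
  have decay_two_κ := tendsto_exp_mul_atTop_of_neg (show -2 * κ < 0 by linarith)
  have decay_add := tendsto_exp_mul_atTop_of_neg (neg_lt_zero.mpr hadd)
  unfold driftSignalCov
  simpa only [mul_zero, add_zero, sub_zero] using
    ((decay_two_κ.const_mul _).const_sub _).add (decay_add.const_mul _)

theorem limit_cov_div_limit_var_mul_sq (δ : ℝ) {σ : ℝ} (hκ : 0 < κ) (hlam : 0 < lam) (hσ : σ ≠ 0) :
    δ ^ 2 / (2 * κ * (κ + lam))
        / ((σ ^ 2 / (2 * lam) + δ ^ 2 / (2 * κ * lam * (κ + lam))) * σ ^ 2)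
      = lam * δ ^ 2 / (σ ^ 2 * (κ * (κ + lam) * σ ^ 2 + δ ^ 2)) := by
  have var_eq : σ ^ 2 / (2 * lam) + δ ^ 2 / (2 * κ * lam * (κ + lam))
      = (κ * (κ + lam) * σ ^ 2 + δ ^ 2) / (2 * κ * lam * (κ + lam)) := by
    field_simp
  have numerator_ne_zero : κ * (κ + lam) * σ ^ 2 + δ ^ 2 ≠ 0 := by positivity
  rw [var_eq]
  field_simp

theorem tendsto_driftSignalCov_div_signalVar_mul_sq {σ : ℝ} (δ v₀ : ℝ)
    (hκ : 0 < κ) (hlam : 0 < lam) (hσ : σ ≠ 0) :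
    Tendsto (fun t => driftSignalCov κ lam δ v₀ t / (signalVar κ lam δ σ v₀ t * σ ^ 2)) atTop
      (𝓝 (lam * δ ^ 2 / (σ ^ 2 * (κ * (κ + lam) * σ ^ 2 + δ ^ 2)))) := by
  rw [← limit_cov_div_limit_var_mul_sq δ hκ hlam hσ]
  exact (tendsto_driftSignalCov δ v₀ hκ (add_pos hκ hlam)).div
    ((tendsto_signalVar δ σ v₀ hκ hlam).mul_const _) (by positivity)

end OUTrend

/-- Convergence of the time-dependent optimal affine coefficients
`a₂*(t) = (m₃ − m₁m₂)/(v₂σ²)` and `b₂*(t) = m₁/σ² − m₂(m₃ − m₁m₂)/(v₂σ²)` to the limiting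
strategy coefficients `a_∞`, `b_∞` as `t → ∞`. -/
theorem ou_optimal_affine_coefficients_limit
    (κ lam δ σ μbar m₀ v₀ : ℝ)
    (hκ : 0 < κ) (hlam : 0 < lam) (hδ : 0 < δ) (hσ : 0 < σ) (hne : κ ≠ lam)
    (m₁ v₁ m₂ v₂ m₃ : ℝ → ℝ)
    (hm₁ : ∀ t, m₁ t = μbar + (m₀ - μbar) * Real.exp (-κ * t))
    (hv₁ : ∀ t, v₁ t = δ ^ 2 / (2 * κ) + (v₀ - δ ^ 2 / (2 * κ)) * Real.exp (-2 * κ * t))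
    (hm₂ : ∀ t, m₂ t = (2 * μbar - σ ^ 2) / (2 * lam)
        + ((lam * m₀ - κ * μbar) / (lam * (κ - lam)) + σ ^ 2 / (2 * lam))
            * Real.exp (-lam * t)
        + (μbar - m₀) / (κ - lam) * Real.exp (-κ * t))
    (hv₂ : ∀ t, v₂ t = σ ^ 2 / (2 * lam) + δ ^ 2 / (2 * κ * lam * (κ + lam))
        + ((v₀ - δ ^ 2 / (2 * lam)) / (κ - lam) ^ 2 - σ ^ 2 / (2 * lam))
            * Real.exp (-2 * lam * t)
        + (v₀ - δ ^ 2 / (2 * κ)) / (κ - lam) ^ 2 * Real.exp (-2 * κ * t)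
        - 2 * (v₀ - δ ^ 2 / (κ + lam)) / (κ - lam) ^ 2 * Real.exp (-(κ + lam) * t))
    (hm₃ : ∀ t, m₃ t = 1 / lam * (κ * μbar / (κ - lam) - σ ^ 2 / 2)
            * (1 - Real.exp (-lam * t)) * m₁ t
        + Real.exp (-lam * t) / (κ - lam)
            * (μbar * (1 - Real.exp (-κ * t)) * m₀ + Real.exp (-κ * t) * (m₀ ^ 2 + v₀))
        - (v₁ t + (m₁ t) ^ 2) / (κ - lam)
        + δ ^ 2 / (κ ^ 2 - lam ^ 2) * (1 - Real.exp (-(κ + lam) * t)))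
    (aInf bInf : ℝ)
    (haInf : aInf = lam * δ ^ 2 / (σ ^ 2 * (κ * (κ + lam) * σ ^ 2 + δ ^ 2)))
    (hbInf : bInf = μbar / σ ^ 2 - (2 * μbar - σ ^ 2) / (2 * lam) * aInf) :
    Tendsto (fun t : ℝ => (m₃ t - m₁ t * m₂ t) / (v₂ t * σ ^ 2)) atTop (nhds aInf)
    ∧ Tendsto (fun t : ℝ =>
        m₁ t / σ ^ 2 - m₂ t * (m₃ t - m₁ t * m₂ t) / (v₂ t * σ ^ 2)) atTop (nhds bInf) := by
  obtain rfl : m₁ = OUTrend.driftMean κ μbar m₀ := funext hm₁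
  obtain rfl : v₁ = OUTrend.driftVar κ δ v₀ := funext hv₁
  obtain rfl : m₂ = OUTrend.signalMean κ lam σ μbar m₀ := funext hm₂
  obtain rfl : v₂ = OUTrend.signalVar κ lam δ σ v₀ := funext hv₂
  obtain rfl : m₃ = OUTrend.driftSignalMoment κ lam δ σ μbar m₀ v₀ := funext hm₃
  have slope := OUTrend.tendsto_driftSignalCov_div_signalVar_mul_sq δ v₀ hκ hlam hσ.ne'
  have intercept := ((OUTrend.tendsto_driftMean μbar m₀ hκ).div_const (σ ^ 2)).sub
    ((OUTrend.tendsto_signalMean σ μbar m₀ hκ hlam).mul slope)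
  rw [← haInf] at slope intercept
  rw [← hbInf] at intercept
  simp only [OUTrend.driftSignalMoment_sub_mul δ σ μbar m₀ v₀ _ hκ.ne' hlam.ne'
    (add_pos hκ hlam).ne' hne, mul_div_assoc]
  exact ⟨slope, intercept⟩
end
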